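/- Let r ∈ ℝ^m and c ∈ ℝ^n be vectors of positive reals with Σ_i r_i = Σ_j c_j. Suppose there exist nonempty proper subsets I ⊊ {1,…,m} and J ⊊ {1,…,n} with Σ_{i ∈ I} r_i = Σ_{j ∈ J} c_j. Then the transportation polytope T_{rc} has an extreme point with at least (m−1)(n−1)+1 zero entries. (Hence T_{rc} is not a simple polytope: it has a vertex lying on more than dim T_{rc} = (m−1)(n−1) facets.) -/

import Mathlib

/-!
The matrices in `T_{rc}` that vanish outside `I × J ∪ Iᶜ × Jᶜ` form a nonempty face: each of the
two blocks is a transportation problem with equal total supply and demand. By Krein–Milman this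
face contains an extreme point `A` of `T_{rc}`.

Since `A` is extreme, a matrix `D` that vanishes at the zeros of `A` and has zero row and column
sums is `0`. Such a `D` is block supported, so within each block the row sums add up to the column
sums, and the vanishing of one row sum per block follows from that of the others. Hence the zeros
of `A`, `m - 2` row sums and `n` column sums already determine an arbitrary `m × n` matrix
linearly, and `A` has at least `mn - (m - 2) - n = (m - 1)(n - 1) + 1` zeros.
-/

open Finset
open scoped Topology

section BlockSupport

variable {ι κ R : Type*} [Fintype ι] [Fintype κ]

/-- `A` is block diagonal for the partitions `I ⊔ Iᶜ` of the rows and `J ⊔ Jᶜ` of the columns: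
it vanishes outside `I × J ∪ Iᶜ × Jᶜ`. -/
def IsBlockSupported [Zero R] (I : Finset ι) (J : Finset κ) (A : Matrix ι κ R) : Prop :=
  ∀ i j, ¬(i ∈ I ↔ j ∈ J) → A i j = 0

namespace IsBlockSupported

variable {I : Finset ι} {J : Finset κ}

lemma compl [DecidableEq ι] [DecidableEq κ] [Zero R] {A : Matrix ι κ R}
    (hA : IsBlockSupported I J A) : IsBlockSupported Iᶜ Jᶜ A :=
  fun i j hij => hA i j fun h => hij (by simp only [mem_compl, h])

lemma sum_rowSums_eq_sum_colSums [AddCommMonoid R] {A : Matrix ι κ R}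
    (hA : IsBlockSupported I J A) : ∑ i ∈ I, ∑ j, A i j = ∑ j ∈ J, ∑ i, A i j := by
  have row_sum : ∀ i ∈ I, ∑ j, A i j = ∑ j ∈ J, A i j := fun i hi =>
    (sum_subset J.subset_univ fun j _ hj => hA i j (by tauto)).symm
  have col_sum : ∀ j ∈ J, ∑ i, A i j = ∑ i ∈ I, A i j := fun j hj =>
    (sum_subset I.subset_univ fun i _ hi => hA i j (by tauto)).symm
  rw [sum_congr rfl row_sum, sum_congr rfl col_sum, sum_comm]

lemma rowSum_eq_zero [AddCommMonoid R] {D : Matrix ι κ R} (hD : IsBlockSupported I J D)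
    (hcol : ∀ j, ∑ i, D i j = 0) {i₀ : ι} (hi₀ : i₀ ∈ I)
    (hrow : ∀ i ∈ I, i ≠ i₀ → ∑ j, D i j = 0) : ∑ j, D i₀ j = 0 :=
  calc ∑ j, D i₀ j = ∑ i ∈ I, ∑ j, D i j := (sum_eq_single_of_mem i₀ hi₀ hrow).symm
    _ = ∑ j ∈ J, ∑ i, D i j := hD.sum_rowSums_eq_sum_colSums
    _ = 0 := sum_eq_zero fun j _ => hcol j

lemma rowSum_eq_zero_of_off_pair [AddCommMonoid R] {D : Matrix ι κ R}
    (hD : IsBlockSupported I J D) (hcol : ∀ j, ∑ i, D i j = 0) {i₀ i₁ : ι} (hi₀ : i₀ ∈ I)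
    (hi₁ : i₁ ∉ I) (hrow : ∀ i, i ≠ i₀ → i ≠ i₁ → ∑ j, D i j = 0) (i : ι) :
    ∑ j, D i j = 0 := by
  classical
  by_cases h₀ : i = i₀
  · subst h₀
    exact hD.rowSum_eq_zero hcol hi₀ fun k hk hki => hrow k hki (ne_of_mem_of_not_mem hk hi₁)
  by_cases h₁ : i = i₁
  · subst h₁
    exact hD.compl.rowSum_eq_zero hcol (mem_compl.2 hi₁) fun k hk hki =>
      hrow k (ne_of_mem_of_not_mem hi₀ (mem_compl.1 hk)).symm hki
  exact hrow i h₀ h₁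

end IsBlockSupported

end BlockSupport

lemma card_mul_card_le_of_entries_margins_determine {ι κ R : Type*} [Fintype ι] [Fintype κ]
    [Ring R] [StrongRankCondition R] (Z : Finset (ι × κ)) (K : Finset ι)
    (hZK : ∀ D : Matrix ι κ R, (∀ p ∈ Z, D p.1 p.2 = 0) → (∀ i ∈ K, ∑ j, D i j = 0) →
      (∀ j, ∑ i, D i j = 0) → D = 0) :
    Fintype.card ι * Fintype.card κ ≤ #Z + (#K + Fintype.card κ) := by
  let Φ : Matrix ι κ R →ₗ[R] (Z → R) × (K → R) × (κ → R) :=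
    { toFun := fun D => (fun p => D p.1.1 p.1.2, fun i => ∑ j, D i j, fun j => ∑ i, D i j)
      map_add' := fun D E => by ext <;> simp [sum_add_distrib]
      map_smul' := fun a D => by ext <;> simp [mul_sum] }
  have hΦ : Function.Injective Φ := by
    refine (injective_iff_map_eq_zero Φ).2 fun D hD => ?_
    simp only [Φ, LinearMap.coe_mk, AddHom.coe_mk, Prod.mk_eq_zero, funext_iff,
      Pi.zero_apply] at hD
    exact hZK D (fun p hp => hD.1 ⟨p, hp⟩) (fun i hi => hD.2.1 ⟨i, hi⟩) hD.2.2
  simpa [Module.finrank_matrix] using LinearMap.finrank_le_finrank_of_injective hΦ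

lemma isClosed_setOf_entries_eq_zero {ι κ R : Type*} [Zero R] [TopologicalSpace R] [T1Space R]
    (P : ι → κ → Prop) : IsClosed {A : Matrix ι κ R | ∀ i j, P i j → A i j = 0} := by
  simp only [Set.ofPred_forall]
  exact isClosed_iInter fun i => isClosed_iInter fun j => isClosed_iInter fun _ =>
    isClosed_singleton.preimage (by fun_prop : Continuous fun A : Matrix ι κ R => A i j)

lemma exists_pos_forall_mul_abs_le {σ : Type*} [Finite σ] {a d : σ → ℝ} (ha : 0 ≤ a)
    (had : ∀ s, a s = 0 → d s = 0) : ∃ ε > 0, ∀ s, ε * |d s| ≤ a s := by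
  have eventually_le : ∀ᶠ ε in 𝓝[>] (0 : ℝ), ∀ s, ε * |d s| ≤ a s := by
    refine Filter.eventually_all.2 fun s => ?_
    rcases (ha s).eq_or_lt with has | has
    · simp [had s has.symm, ← has]
    · have tendsto_zero : Filter.Tendsto (fun ε : ℝ => ε * |d s|) (𝓝[>] 0) (𝓝 0) :=
        tendsto_nhdsWithin_of_tendsto_nhds (Continuous.tendsto' (by fun_prop) _ _ (zero_mul _))
      exact tendsto_zero.eventually_le_const has
  exact (eventually_mem_nhdsWithin.and eventually_le).exists

section TransportationPolytope

variable {ι κ : Type*} [Fintype ι] [Fintype κ] {r r' : ι → ℝ} {c c' : κ → ℝ}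

/-- The transportation polytope `T_{rc}`: nonnegative matrices with row sums `r` and column
sums `c`. -/
def transportationPolytope (r : ι → ℝ) (c : κ → ℝ) : Set (Matrix ι κ ℝ) :=
  {A | (∀ i j, 0 ≤ A i j) ∧ (∀ i, ∑ j, A i j = r i) ∧ ∀ j, ∑ i, A i j = c j}

lemma add_mem_transportationPolytope {A B : Matrix ι κ ℝ}
    (hA : A ∈ transportationPolytope r c) (hB : B ∈ transportationPolytope r' c') :
    A + B ∈ transportationPolytope (r + r') (c + c') := by
  obtain ⟨A_nonneg, A_row, A_col⟩ := hA
  obtain ⟨B_nonneg, B_row, B_col⟩ := hB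
  refine ⟨fun i j => add_nonneg (A_nonneg i j) (B_nonneg i j), fun i => ?_, fun j => ?_⟩
  · simp [sum_add_distrib, A_row, B_row]
  · simp [sum_add_distrib, A_col, B_col]

/-- The rank-one matrix `r cᵀ / ∑ r`, the standard point of `T_{rc}`. If `∑ r = 0`, division by
zero makes it the zero matrix, the only point of `T_{rc}` for nonnegative margins of total `0`. -/
noncomputable def productCoupling (r : ι → ℝ) (c : κ → ℝ) : Matrix ι κ ℝ :=
  Matrix.of fun i j => r i * c j / ∑ k, r k

lemma productCoupling_mem_transportationPolytope (hr : 0 ≤ r) (hc : 0 ≤ c)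
    (hs : ∑ i, r i = ∑ j, c j) : productCoupling r c ∈ transportationPolytope r c := by
  refine ⟨fun i j => div_nonneg (mul_nonneg (hr i) (hc j)) (sum_nonneg fun k _ => hr k),
    fun i => ?_, fun j => ?_⟩
  · simp only [productCoupling, Matrix.of_apply]
    rw [← sum_div, ← mul_sum, ← hs]
    refine mul_div_cancel_of_imp fun h => ?_
    exact (sum_eq_zero_iff_of_nonneg fun k _ => hr k).1 h i (mem_univ i)
  · simp only [productCoupling, Matrix.of_apply]
    rw [← sum_div, ← sum_mul, mul_comm]
    refine mul_div_cancel_of_imp fun h => ?_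
    exact (sum_eq_zero_iff_of_nonneg fun k _ => hc k).1 (hs ▸ h) j (mem_univ j)

lemma isClosed_transportationPolytope : IsClosed (transportationPolytope r c) := by
  simp only [transportationPolytope, Set.ofPred_and, Set.ofPred_forall]
  refine .inter ?_ (.inter ?_ ?_)
  · exact isClosed_iInter fun i => isClosed_iInter fun j =>
      isClosed_le continuous_const (by fun_prop)
  · exact isClosed_iInter fun i => isClosed_eq (by fun_prop) continuous_const
  · exact isClosed_iInter fun j => isClosed_eq (by fun_prop) continuous_const

lemma isCompact_transportationPolytope : IsCompact (transportationPolytope r c) := by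
  have entries_bounded : transportationPolytope r c ⊆
      Set.univ.pi fun i => Set.univ.pi fun _ => Set.Icc 0 (r i) := by
    rintro A ⟨A_nonneg, A_row, -⟩ i - j -
    exact ⟨A_nonneg i j, A_row i ▸ single_le_sum (fun k _ => A_nonneg i k) (mem_univ j)⟩
  exact (isCompact_univ_pi fun i => isCompact_univ_pi fun _ => isCompact_Icc).of_isClosed_subset
    isClosed_transportationPolytope entries_bounded

lemma isExtreme_inter_setOf_entries_eq_zero (P : ι → κ → Prop) :
    IsExtreme ℝ (transportationPolytope r c)
      (transportationPolytope r c ∩ {A | ∀ i j, P i j → A i j = 0}) := by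
  refine ⟨Set.inter_subset_left, ?_⟩
  rintro X hX Y hY A ⟨-, hA⟩ ⟨a, b, a_pos, b_pos, -, rfl⟩
  refine ⟨hX, fun i j hij => ?_⟩
  have sum_zero : a * X i j + b * Y i j = 0 := hA i j hij
  have X_nonneg : 0 ≤ a * X i j := mul_nonneg a_pos.le (hX.1 i j)
  have Y_nonneg : 0 ≤ b * Y i j := mul_nonneg b_pos.le (hY.1 i j)
  exact (mul_eq_zero_iff_left a_pos.ne').1
    ((add_eq_zero_iff_of_nonneg X_nonneg Y_nonneg).1 sum_zero).1

lemma exists_extremePoint_entries_eq_zero {P : ι → κ → Prop}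
    (h : ∃ A ∈ transportationPolytope r c, ∀ i j, P i j → A i j = 0) :
    ∃ A ∈ Set.extremePoints ℝ (transportationPolytope r c), ∀ i j, P i j → A i j = 0 := by
  have : LocallyConvexSpace ℝ (Matrix ι κ ℝ) :=
    inferInstanceAs (LocallyConvexSpace ℝ (ι → κ → ℝ))
  obtain ⟨A, hA⟩ := (isCompact_transportationPolytope.inter_right
    (isClosed_setOf_entries_eq_zero P)).extremePoints_nonempty h
  exact ⟨A, (isExtreme_inter_setOf_entries_eq_zero P).extremePoints_subset_extremePoints hA,
    (extremePoints_subset hA).2⟩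

lemma exists_mem_transportationPolytope_isBlockSupported (hr : 0 ≤ r) (hc : 0 ≤ c)
    (hs : ∑ i, r i = ∑ j, c j) {I : Finset ι} {J : Finset κ}
    (hIJ : ∑ i ∈ I, r i = ∑ j ∈ J, c j) :
    ∃ A ∈ transportationPolytope r c, IsBlockSupported I J A := by
  classical
  have block_mem : ∀ (I : Finset ι) (J : Finset κ), ∑ i ∈ I, r i = ∑ j ∈ J, c j →
      productCoupling (Set.indicator I r) (Set.indicator J c) ∈
        transportationPolytope (Set.indicator I r) (Set.indicator J c) := fun I J h =>
    productCoupling_mem_transportationPolytope (Set.indicator_nonneg fun i _ => hr i)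
      (Set.indicator_nonneg fun j _ => hc j) (by simpa [Set.indicator_apply] using h)
  have hIJ_compl : ∑ i ∈ Iᶜ, r i = ∑ j ∈ Jᶜ, c j := by
    linarith [sum_add_sum_compl I r, sum_add_sum_compl J c]
  have sum_mem := add_mem_transportationPolytope (block_mem I J hIJ) (block_mem Iᶜ Jᶜ hIJ_compl)
  rw [coe_compl, coe_compl, Set.indicator_self_add_compl, Set.indicator_self_add_compl] at sum_mem
  refine ⟨_, sum_mem, fun i j hij => ?_⟩
  by_cases hi : i ∈ I <;> by_cases hj : j ∈ J <;> simp_all [productCoupling]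

lemma eq_zero_of_margins_eq_zero_of_mem_extremePoints {A D : Matrix ι κ ℝ}
    (hA : A ∈ Set.extremePoints ℝ (transportationPolytope r c))
    (hAD : ∀ i j, A i j = 0 → D i j = 0) (hrow : ∀ i, ∑ j, D i j = 0)
    (hcol : ∀ j, ∑ i, D i j = 0) : D = 0 := by
  obtain ⟨⟨A_nonneg, A_row, A_col⟩, A_extreme⟩ := hA
  obtain ⟨ε, ε_pos, hε⟩ := exists_pos_forall_mul_abs_le
    (a := fun p : ι × κ => A p.1 p.2) (d := fun p => D p.1 p.2)
    (fun p => A_nonneg p.1 p.2) (fun p => hAD p.1 p.2)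
  have perturbation_mem : ∀ t : ℝ, |t| = ε → A + t • D ∈ transportationPolytope r c := by
    intro t ht
    refine ⟨fun i j => ?_, fun i => ?_, fun j => ?_⟩
    · have : |t * D i j| ≤ A i j := by simpa [abs_mul, ht] using hε (i, j)
      simpa [neg_le_iff_add_nonneg'] using (abs_le.1 this).1
    · simp [sum_add_distrib, ← mul_sum, A_row, hrow]
    · simp [sum_add_distrib, ← mul_sum, A_col, hcol]
  have A_mem_openSegment : A ∈ openSegment ℝ (A + ε • D) (A + (-ε) • D) :=
    ⟨1 / 2, 1 / 2, by norm_num, by norm_num, by norm_num, by module⟩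
  have : A + ε • D = A := A_extreme (perturbation_mem ε (abs_of_pos ε_pos))
    (perturbation_mem (-ε) (by rw [abs_neg, abs_of_pos ε_pos])) A_mem_openSegment
  exact (smul_eq_zero_iff_right ε_pos.ne').1 (add_eq_left.1 this)

lemma card_mul_card_add_two_le_of_mem_extremePoints {A : Matrix ι κ ℝ}
    (hA : A ∈ Set.extremePoints ℝ (transportationPolytope r c)) {I : Finset ι} {J : Finset κ}
    (hAIJ : IsBlockSupported I J A) {i₀ i₁ : ι} (hi₀ : i₀ ∈ I) (hi₁ : i₁ ∉ I) :
    Fintype.card ι * Fintype.card κ + 2 ≤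
      #{p : ι × κ | A p.1 p.2 = 0} + (Fintype.card ι + Fintype.card κ) := by
  classical
  have dimension_bound := card_mul_card_le_of_entries_margins_determine (R := ℝ)
    {p : ι × κ | A p.1 p.2 = 0} {i₀, i₁}ᶜ fun D hZ hK hcol => by
      have hAD : ∀ i j, A i j = 0 → D i j = 0 := fun i j h => hZ (i, j) (by simpa using h)
      have hD : IsBlockSupported I J D := fun i j hij => hAD i j (hAIJ i j hij)
      have hrow : ∀ i, ∑ j, D i j = 0 := hD.rowSum_eq_zero_of_off_pair hcol hi₀ hi₁
        fun i h₀ h₁ => hK i (by simp [h₀, h₁])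
      exact eq_zero_of_margins_eq_zero_of_mem_extremePoints hA hAD hrow hcol
  have card_dropped : #{i₀, i₁} = 2 := card_pair (ne_of_mem_of_not_mem hi₀ hi₁)
  have card_remaining := card_add_card_compl {i₀, i₁}
  lia

end TransportationPolytope

theorem stmt10_general {ι κ : Type*} [Fintype ι] [Fintype κ] [Nonempty κ] {r : ι → ℝ}
    {c : κ → ℝ} (hr : 0 ≤ r) (hc : 0 ≤ c) (hs : ∑ i, r i = ∑ j, c j) {I : Finset ι}
    {J : Finset κ} (hI : I.Nonempty) (hI' : I ≠ univ) (hIJ : ∑ i ∈ I, r i = ∑ j ∈ J, c j) :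
    ∃ A ∈ Set.extremePoints ℝ (transportationPolytope r c),
      (Fintype.card ι - 1) * (Fintype.card κ - 1) + 1 ≤ #{p : ι × κ | A p.1 p.2 = 0} := by
  obtain ⟨i₀, hi₀⟩ := hI
  obtain ⟨i₁, hi₁⟩ : ∃ i, i ∉ I := by simpa [eq_univ_iff_forall] using hI'
  obtain ⟨A, hA, hAIJ⟩ := exists_extremePoint_entries_eq_zero
    (exists_mem_transportationPolytope_isBlockSupported hr hc hs hIJ)
  refine ⟨A, hA, ?_⟩
  have card_bound := card_mul_card_add_two_le_of_mem_extremePoints hA hAIJ hi₀ hi₁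
  obtain ⟨m, hm⟩ := Nat.exists_eq_add_one.2 (Fintype.card_pos_iff.2 ⟨i₀⟩)
  obtain ⟨n, hn⟩ := Nat.exists_eq_add_one.2 (Fintype.card_pos (α := κ))
  rw [hm, hn] at card_bound ⊢
  simp only [Nat.add_sub_cancel]
  linarith

/-- If there are nonempty proper index sets `I`, `J` with
`∑_{i ∈ I} r_i = ∑_{j ∈ J} c_j`, then the transportation polytope `T_{rc}` has an
extreme point with at least `(m-1)(n-1)+1` zero entries (hence it is not simple). -/
theorem stmt10 (m n : ℕ) (r : Fin m → ℝ) (c : Fin n → ℝ)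
    (hr : ∀ i, 0 < r i) (hc : ∀ j, 0 < c j) (hs : ∑ i, r i = ∑ j, c j)
    (I : Finset (Fin m)) (J : Finset (Fin n))
    (hI : I.Nonempty) (hI' : I ≠ Finset.univ) (hJ : J.Nonempty) (hJ' : J ≠ Finset.univ)
    (hIJ : ∑ i ∈ I, r i = ∑ j ∈ J, c j)
    (T : Set (Matrix (Fin m) (Fin n) ℝ))
    (hT : T = {A | (∀ i j, 0 ≤ A i j) ∧ (∀ i, ∑ j, A i j = r i) ∧
      (∀ j, ∑ i, A i j = c j)}) :
    ∃ A ∈ Set.extremePoints ℝ T,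
      (m - 1) * (n - 1) + 1 ≤
        (Finset.univ.filter fun p : Fin m × Fin n => A p.1 p.2 = 0).card := by
  have : Nonempty (Fin n) := hJ.to_type
  simpa [hT, transportationPolytope] using stmt10_general (fun i => (hr i).le)
    (fun j => (hc j).le) hs hI hI' hIJ
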